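/- Let A ∈ ℝ^{m×n} with m ≤ n be regular, i.e. for every k = 1,…,m the k×k leading principal submatrix of A (first k rows and first k columns) is nonsingular. Consider the implicit LU recursion: H₁ = I ∈ ℝ^{n×n}, H_{i+1} = H_i − (H_i Aᵀ e_i)(e_iᵀ H_i)/(e_iᵀ H_i Aᵀ e_i), with search vectors p_i = H_iᵀ e_i, where e_i denotes the i-th unit vector. Then for every i = 1,…,m: the recursion is well defined (e_iᵀ H_i Aᵀ e_i ≠ 0); the first i rows of H_{i+1} are zero; the trailing block of H_{i+1} is the identity, i.e. (H_{i+1})_{jk} = δ_{jk} whenever j > i and k > i; and the search vector p_i satisfies (p_i)_i = 1 and (p_i)_j = 0 for all j > i, so that the matrix P = (p₁,…,p_m) is unit upper triangular. -/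

import Mathlib

open Matrix

/-!
The update at step `i` forces `H_{i+1} a_i = 0` and `e_iᵀ H_{i+1} = 0`, and it keeps every vector
already annihilated by `H_i` on either side. By induction `H_i` kills the rows `a_l` with `l < i` of
`A`, its own first `i` rows vanish, and its trailing block is the identity, since `e_iᵀ H_i` has no
entries to the right of position `i` and so the update leaves the later columns alone.

The pivot is `p_i ⬝ a_i`. The vector `p_i` is orthogonal to all earlier rows of `A` and supported on
the leading coordinates, up to the `i`-th, where it equals `1`. A vanishing pivot would therefore
put a nonzero vector in the kernel of the corresponding leading principal submatrix.
-/

section Submatrix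

variable {R l m n o : Type*} [Fintype n] [Fintype o]

theorem submatrix_mulVec_comp_of_support_subset_range [NonUnitalNonAssocSemiring R]
    (A : Matrix m n R) (f : l → m) {g : o → n} (hg : g.Injective) {v : n → R}
    (hv : Function.support v ⊆ Set.range g) :
    A.submatrix f g *ᵥ (v ∘ g) = (A *ᵥ v) ∘ f := by
  funext i
  refine Fintype.sum_of_injective g hg _ _ (fun j hj => ?_) fun _ => rfl
  rw [Function.notMem_support.mp (mt (@hv j) hj), mul_zero]

theorem eq_zero_of_mulVec_comp_eq_zero_of_isUnit_det_submatrix [DecidableEq o] [CommRing R]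
    {A : Matrix m n R} {f : o → m} {g : o → n} (hA : IsUnit (A.submatrix f g).det)
    (hg : g.Injective) {v : n → R} (hv : Function.support v ⊆ Set.range g)
    (h : (A *ᵥ v) ∘ f = 0) : v = 0 := by
  have hker : A.submatrix f g *ᵥ (v ∘ g) = 0 := by
    rw [submatrix_mulVec_comp_of_support_subset_range A f hg hv, h]
  have hvg : v ∘ g = 0 :=
    mulVec_injective_of_isUnit ((isUnit_iff_isUnit_det _).mpr hA) (hker.trans (mulVec_zero _).symm)
  funext j
  by_contra hj
  obtain ⟨k, rfl⟩ := hv hj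
  exact hj (congrFun hvg k)

end Submatrix

section AbaffianUpdate

variable {K ι κ : Type*} [Field K] [Fintype ι] [Fintype κ]

/-- One step `H - (H a)(wᵀ H) / (wᵀ H a)` of the Abaffian recursion of the ABS class, with
`a = Aᵀ v`. If the pivot `wᵀ H a` is zero, then the junk value `0⁻¹ = 0` makes it return `H`. -/
def abaffianUpdate (H : Matrix ι κ K) (a : κ → K) (w : ι → K) : Matrix ι κ K :=
  H - (w ⬝ᵥ H *ᵥ a)⁻¹ • vecMulVec (H *ᵥ a) (w ᵥ* H)

variable {H : Matrix ι κ K} {a : κ → K} {w : ι → K}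

theorem abaffianUpdate_mulVec (x : κ → K) :
    abaffianUpdate H a w *ᵥ x =
      H *ᵥ x - ((w ⬝ᵥ H *ᵥ a)⁻¹ * (w ⬝ᵥ H *ᵥ x)) • H *ᵥ a := by
  rw [abaffianUpdate, sub_mulVec, smul_mulVec, vecMulVec_mulVec, op_smul_eq_smul, smul_smul,
    dotProduct_mulVec w H x]

theorem vecMul_abaffianUpdate (y : ι → K) :
    y ᵥ* abaffianUpdate H a w =
      y ᵥ* H - ((w ⬝ᵥ H *ᵥ a)⁻¹ * (y ⬝ᵥ H *ᵥ a)) • w ᵥ* H := by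
  rw [abaffianUpdate, vecMul_sub, vecMul_smul, vecMul_vecMulVec, smul_smul]

theorem abaffianUpdate_mulVec_self (h : w ⬝ᵥ H *ᵥ a ≠ 0) : abaffianUpdate H a w *ᵥ a = 0 := by
  rw [abaffianUpdate_mulVec, inv_mul_cancel₀ h, one_smul, sub_self]

theorem vecMul_abaffianUpdate_self (h : w ⬝ᵥ H *ᵥ a ≠ 0) : w ᵥ* abaffianUpdate H a w = 0 := by
  rw [vecMul_abaffianUpdate, inv_mul_cancel₀ h, one_smul, sub_self]

theorem abaffianUpdate_mulVec_eq_zero {x : κ → K} (hx : H *ᵥ x = 0) :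
    abaffianUpdate H a w *ᵥ x = 0 := by
  rw [abaffianUpdate_mulVec, hx, dotProduct_zero, mul_zero, zero_smul, sub_zero]

theorem vecMul_abaffianUpdate_eq_zero {y : ι → K} (hy : y ᵥ* H = 0) :
    y ᵥ* abaffianUpdate H a w = 0 := by
  rw [vecMul_abaffianUpdate, dotProduct_mulVec y, hy, zero_dotProduct, mul_zero, zero_smul,
    sub_zero]

theorem abaffianUpdate_apply_of_vecMul_apply_eq_zero {k : κ} (hk : (w ᵥ* H) k = 0) (j : ι) :
    abaffianUpdate H a w j k = H j k := by
  simp [abaffianUpdate, vecMulVec_apply, hk]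

end AbaffianUpdate

section ImplicitLU

variable {K : Type*} [Field K] {m n : ℕ} {A : Matrix (Fin m) (Fin n) K}
  {H : Matrix (Fin n) (Fin n) K}

/-- The properties of the Abaffian reached after `i` steps of the implicit LU algorithm for `A`
that are carried through the recursion. Indices start at `0`, so the steps taken are those for the
rows `l < i` of `A`. -/
structure IsImplicitLUAbaffian (A : Matrix (Fin m) (Fin n) K) (i : ℕ)
    (H : Matrix (Fin n) (Fin n) K) : Prop where
  row_eq_zero : ∀ j : Fin n, j < i → H.row j = 0
  apply_eq_one_apply : ∀ j k : Fin n, i ≤ j → i ≤ k → H j k = (1 : Matrix (Fin n) (Fin n) K) j k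
  mulVec_eq_zero : ∀ l : Fin m, l < i → H *ᵥ A l = 0

namespace IsImplicitLUAbaffian

theorem one (A : Matrix (Fin m) (Fin n) K) : IsImplicitLUAbaffian A 0 1 where
  row_eq_zero _ hj := absurd hj (Nat.not_lt_zero _)
  apply_eq_one_apply _ _ _ _ := rfl
  mulVec_eq_zero _ hl := absurd hl (Nat.not_lt_zero _)

theorem apply_self {i : Fin n} (h : IsImplicitLUAbaffian A i H) : H i i = 1 := by
  rw [h.apply_eq_one_apply i i le_rfl le_rfl, one_apply_eq]

theorem apply_eq_zero_of_lt {i j : Fin n} (h : IsImplicitLUAbaffian A i H) (hij : i < j) :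
    H i j = 0 := by
  rw [h.apply_eq_one_apply i j le_rfl hij.le, one_apply_ne hij.ne]

theorem support_row_subset_range_castLE {i : Fin n} (h : IsImplicitLUAbaffian A i H) :
    Function.support (H.row i) ⊆ Set.range (Fin.castLE i.2) := by
  intro j hj
  have hji : j ≤ i := not_lt.mp fun hij => hj (h.apply_eq_zero_of_lt hij)
  exact ⟨⟨j, Nat.lt_succ_of_le hji⟩, rfl⟩

theorem mulVec_apply_ne_zero {hmn : m ≤ n} {i : Fin m}
    (hA : IsUnit (A.submatrix (Fin.castLE i.2) (Fin.castLE (i.2.trans_le hmn))).det)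
    (h : IsImplicitLUAbaffian A i H) : (H *ᵥ A i) (Fin.castLE hmn i) ≠ 0 := by
  intro hpivot
  have hker : (A *ᵥ H.row (Fin.castLE hmn i)) ∘ Fin.castLE i.2 = 0 := by
    funext l
    change A (Fin.castLE i.2 l) ⬝ᵥ H.row (Fin.castLE hmn i) = 0
    rw [dotProduct_comm]
    obtain hl | hl : Fin.castLE i.2 l < i ∨ Fin.castLE i.2 l = i :=
      lt_or_eq_of_le (Nat.le_of_lt_succ l.2)
    · exact congrFun (h.mulVec_eq_zero _ hl) _
    · rw [hl]
      exact hpivot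
  have hrow : H.row (Fin.castLE hmn i) = 0 :=
    eq_zero_of_mulVec_comp_eq_zero_of_isUnit_det_submatrix hA (Fin.castLE_injective _)
      (support_row_subset_range_castLE (i := Fin.castLE hmn i) h) hker
  exact one_ne_zero ((apply_self (i := Fin.castLE hmn i) h).symm.trans (congrFun hrow _))

theorem update {hmn : m ≤ n} {i : Fin m} (h : IsImplicitLUAbaffian A i H)
    (hpivot : (H *ᵥ A i) (Fin.castLE hmn i) ≠ 0) :
    IsImplicitLUAbaffian A (i + 1) (abaffianUpdate H (A i) (Pi.single (Fin.castLE hmn i) 1)) := by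
  have hpivot' : Pi.single (Fin.castLE hmn i) 1 ⬝ᵥ H *ᵥ A i ≠ 0 := by
    rwa [single_one_dotProduct]
  refine ⟨fun j hj => ?_, fun j k hj hk => ?_, fun l hl => ?_⟩
  · rw [← single_one_vecMul]
    obtain hji | rfl : j < Fin.castLE hmn i ∨ j = Fin.castLE hmn i :=
      lt_or_eq_of_le (Nat.le_of_lt_succ hj)
    · exact vecMul_abaffianUpdate_eq_zero ((single_one_vecMul j H).trans (h.row_eq_zero j hji))
    · exact vecMul_abaffianUpdate_self hpivot'
  · have hcol : (Pi.single (Fin.castLE hmn i) 1 ᵥ* H) k = 0 := by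
      rw [single_one_vecMul]
      exact apply_eq_zero_of_lt (i := Fin.castLE hmn i) h hk
    rw [abaffianUpdate_apply_of_vecMul_apply_eq_zero hcol]
    exact h.apply_eq_one_apply j k (Nat.le_of_succ_le hj) (Nat.le_of_succ_le hk)
  · obtain hli | rfl : l < i ∨ l = i := lt_or_eq_of_le (Nat.le_of_lt_succ hl)
    · exact abaffianUpdate_mulVec_eq_zero (h.mulVec_eq_zero l hli)
    · exact abaffianUpdate_mulVec_self hpivot'

theorem of_recursion {hmn : m ≤ n}
    (hA : ∀ k : Fin m,
      IsUnit (A.submatrix (Fin.castLE k.2) (Fin.castLE (k.2.trans_le hmn))).det)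
    {H : ℕ → Matrix (Fin n) (Fin n) K} (hH0 : H 0 = 1)
    (hH : ∀ i : Fin m,
      H (i + 1) = abaffianUpdate (H i) (A i) (Pi.single (Fin.castLE hmn i) 1))
    {i : ℕ} (hi : i ≤ m) : IsImplicitLUAbaffian A i (H i) := by
  induction i with
  | zero => exact hH0 ▸ one A
  | succ i ih =>
    have h : IsImplicitLUAbaffian A i (H i) := ih (Nat.le_of_succ_le hi)
    have hpivot : (H i *ᵥ A ⟨i, hi⟩) (Fin.castLE hmn ⟨i, hi⟩) ≠ 0 :=
      mulVec_apply_ne_zero (hA ⟨i, hi⟩) h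
    rw [hH ⟨i, hi⟩]
    exact update (i := ⟨i, hi⟩) h hpivot

end IsImplicitLUAbaffian

end ImplicitLU

theorem implicitLU_abaffian_structure_general
    {K : Type*} [Field K]
    (m n : ℕ) (hmn : m ≤ n)
    (A : Matrix (Fin m) (Fin n) K)
    (hA : ∀ k : Fin m,
      IsUnit (A.submatrix (Fin.castLE k.2) (Fin.castLE (k.2.trans_le hmn))).det)
    (H : ℕ → Matrix (Fin n) (Fin n) K) (hH0 : H 0 = 1)
    (hH : ∀ i : Fin m,
      H (↑i + 1) = H ↑i -
        ((H ↑i *ᵥ A i) (Fin.castLE hmn i))⁻¹ •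
          vecMulVec (H ↑i *ᵥ A i) (Pi.single (Fin.castLE hmn i) 1 ᵥ* H ↑i))
    (p : Fin m → Fin n → K)
    (hp : ∀ i : Fin m, p i = (H ↑i)ᵀ *ᵥ Pi.single (Fin.castLE hmn i) 1) :
    ∀ i : Fin m,
      ((H ↑i *ᵥ A i) (Fin.castLE hmn i) ≠ 0) ∧
      (∀ j : Fin n, (j : ℕ) ≤ (i : ℕ) → ∀ k : Fin n, H (↑i + 1) j k = 0) ∧
      (∀ j k : Fin n, (i : ℕ) < (j : ℕ) → (i : ℕ) < (k : ℕ) →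
        H (↑i + 1) j k = if j = k then 1 else 0) ∧
      p i (Fin.castLE hmn i) = 1 ∧
      (∀ j : Fin n, (i : ℕ) < (j : ℕ) → p i j = 0) := by
  have hupdate (i : Fin m) :
      H (i + 1) = abaffianUpdate (H i) (A i) (Pi.single (Fin.castLE hmn i) 1) := by
    rw [hH i, abaffianUpdate, single_one_dotProduct]
  have hrow (i : Fin m) : p i = (H i).row (Fin.castLE hmn i) := by
    rw [hp i, mulVec_single_one, col_transpose]
  intro i
  have hi : IsImplicitLUAbaffian A (Fin.castLE hmn i) (H i) :=
    .of_recursion hA hH0 hupdate i.2.le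
  have hi' : IsImplicitLUAbaffian A (i + 1) (H (i + 1)) :=
    .of_recursion hA hH0 hupdate i.2
  rw [hrow i]
  exact ⟨hi.mulVec_apply_ne_zero (hA i),
    fun j hj => congrFun (hi'.row_eq_zero j (Nat.lt_succ_of_le hj)),
    fun j k hj hk => (hi'.apply_eq_one_apply j k hj hk).trans one_apply,
    hi.apply_self,
    fun _ => hi.apply_eq_zero_of_lt⟩

/-- **Structure of the Abaffians in the implicit LU algorithm.** If `A` is
regular (all leading principal submatrices nonsingular), then the implicit LU
recursion (`H 0 = I`, `H_{i+1} = H_i − (H_i Aᵀ e_i)(e_iᵀ H_i)/(e_iᵀ H_i Aᵀ e_i)`,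
`p_i = H_iᵀ e_i`, where `Aᵀ e_i = a_i` is the `i`-th row of `A`) is well defined;
the first `i` rows of `H_{i+1}` vanish, its trailing block is the identity, and
the search vectors satisfy `(p_i)_i = 1` and `(p_i)_j = 0` for `j > i`, so that
`P = (p₁,…,p_m)` is unit upper triangular. -/
theorem implicitLU_abaffian_structure
    (m n : ℕ) (hmn : m ≤ n)
    (A : Matrix (Fin m) (Fin n) ℝ)
    (hA : ∀ k : Fin m,
      IsUnit (A.submatrix (Fin.castLE k.2) (Fin.castLE (k.2.trans_le hmn))).det)
    (H : ℕ → Matrix (Fin n) (Fin n) ℝ) (hH0 : H 0 = 1)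
    (hH : ∀ i : Fin m,
      H (↑i + 1) = H ↑i -
        ((H ↑i *ᵥ A i) (Fin.castLE hmn i))⁻¹ •
          vecMulVec (H ↑i *ᵥ A i) (Pi.single (Fin.castLE hmn i) 1 ᵥ* H ↑i))
    (p : Fin m → Fin n → ℝ)
    (hp : ∀ i : Fin m, p i = (H ↑i)ᵀ *ᵥ Pi.single (Fin.castLE hmn i) 1) :
    ∀ i : Fin m,
      ((H ↑i *ᵥ A i) (Fin.castLE hmn i) ≠ 0) ∧
      (∀ j : Fin n, (j : ℕ) ≤ (i : ℕ) → ∀ k : Fin n, H (↑i + 1) j k = 0) ∧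
      (∀ j k : Fin n, (i : ℕ) < (j : ℕ) → (i : ℕ) < (k : ℕ) →
        H (↑i + 1) j k = if j = k then 1 else 0) ∧
      p i (Fin.castLE hmn i) = 1 ∧
      (∀ j : Fin n, (i : ℕ) < (j : ℕ) → p i j = 0) :=
  implicitLU_abaffian_structure_general m n hmn A hA H hH0 hH p hp
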